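/- Let 1 ≤ p ≤ ∞ and n, m ≥ 1. For every linear map u : M_n → M_m, the regular norm of u relative to p equals the norm of u as a linear functional on (M_n ⊗ M_m, ρ_p) under the trace pairing: ‖u‖_r = sup{ |T((u ⊗ id_{M_m})(a))| : a ∈ M_n ⊗ M_m, ρ_p(a) ≤ 1 }. (Theorem 3.2: (X_p^{nm})^* = B_r(S_p^n, S_p^m) isometrically.) -/

import Mathlib

open scoped Kronecker ENNReal Classical ComplexOrder
open Matrix

noncomputable section

/-- The operator norm (`S_∞` norm) of a complex matrix, acting on Euclidean space. -/
def opNorm {ι : Type} [Fintype ι] [DecidableEq ι] (a : Matrix ι ι ℂ) : ℝ :=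
  ‖LinearMap.toContinuousLinearMap (Matrix.toEuclideanLin a)‖

/-- The Schatten `p`-norm of a complex matrix: the `ℓ^p` norm of its singular values
(the square roots of the eigenvalues of `aᴴ * a`); for `p = ∞` it is the operator norm. -/
def schattenNorm {ι : Type} [Fintype ι] [DecidableEq ι] (p : ℝ≥0∞) (a : Matrix ι ι ℂ) : ℝ :=
  if p = ∞ then opNorm a
  else (∑ i, Real.sqrt ((Matrix.posSemidef_conjTranspose_mul_self a).isHermitian.eigenvalues i) ^ p.toReal)
      ^ (1 / p.toReal)

/-- Pisier's vector-valued Schatten norm `‖x‖_{S_p^N[M_n]}` on `M_N ⊗ M_n`: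
the infimum of `‖a‖_{S_{2p}} ‖y‖_{S_∞} ‖b‖_{S_{2p}}` over factorizations
`x = (a ⊗ 1) · y · (b ⊗ 1)`. -/
def pisierNorm (p : ℝ≥0∞) {N n : ℕ} (x : Matrix (Fin N × Fin n) (Fin N × Fin n) ℂ) : ℝ :=
  sInf { r | ∃ (a b : Matrix (Fin N) (Fin N) ℂ)
      (y : Matrix (Fin N × Fin n) (Fin N × Fin n) ℂ),
      x = (a ⊗ₖ (1 : Matrix (Fin n) (Fin n) ℂ)) * y * (b ⊗ₖ (1 : Matrix (Fin n) (Fin n) ℂ)) ∧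
      r = schattenNorm (2 * p) a * opNorm y * schattenNorm (2 * p) b }

/-- The amplification `u ⊗ id_{M_n} : M_N ⊗ M_n → M_m ⊗ M_n` of a map `u : M_N → M_m`,
acting as `u` on each `M_n`-block entry. -/
def amp {N m n : ℕ} (u : Matrix (Fin N) (Fin N) ℂ → Matrix (Fin m) (Fin m) ℂ)
    (x : Matrix (Fin N × Fin n) (Fin N × Fin n) ℂ) : Matrix (Fin m × Fin n) (Fin m × Fin n) ℂ :=
  Matrix.of fun ik jl => u (Matrix.of fun i j => x (i, ik.2) (j, jl.2)) ik.1 jl.1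

/-- The amplification `id_{M_n} ⊗ u : M_n ⊗ M_N → M_n ⊗ M_m` of a map `u : M_N → M_m`. -/
def ampLeft {n N m : ℕ} (u : Matrix (Fin N) (Fin N) ℂ → Matrix (Fin m) (Fin m) ℂ)
    (x : Matrix (Fin n × Fin N) (Fin n × Fin N) ℂ) : Matrix (Fin n × Fin m) (Fin n × Fin m) ℂ :=
  Matrix.of fun ki lj => u (Matrix.of fun i j => x (ki.1, i) (lj.1, j)) ki.2 lj.2

/-- The trace pairing `T : M_k ⊗ M_k → ℂ`, with `T(a ⊗ b) = tr(ᵗa·b)`; writing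
`z` as a `k×k` matrix of blocks `z_{ij} ∈ M_k`, `T(z) = Σ_{i,j} (z_{ij})_{ij}`. -/
def tracePair {k : ℕ} (z : Matrix (Fin k × Fin k) (Fin k × Fin k) ℂ) : ℂ :=
  ∑ i : Fin k, ∑ j : Fin k, z (i, i) (j, j)

/-- A map `u : M_N → M_m` is completely positive if all its amplifications
`id_{M_n} ⊗ u` preserve positive semidefiniteness. -/
def CompletelyPositive {N m : ℕ}
    (u : Matrix (Fin N) (Fin N) ℂ → Matrix (Fin m) (Fin m) ℂ) : Prop :=
  ∀ (n : ℕ) (x : Matrix (Fin n × Fin N) (Fin n × Fin N) ℂ),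
    x.PosSemidef → (ampLeft u x).PosSemidef

/-- The regular norm (relative to `p`) of `u : M_N → M_m`: the supremum in `[0,∞]`
over `n ≥ 1` of the norms of the amplifications `u ⊗ id_{M_n}` from
`(M_N ⊗ M_n, ‖·‖_{S_p^N[M_n]})` to `(M_m ⊗ M_n, ‖·‖_{S_p^m[M_n]})`. -/
def regNorm (p : ℝ≥0∞) {N m : ℕ}
    (u : Matrix (Fin N) (Fin N) ℂ → Matrix (Fin m) (Fin m) ℂ) : ℝ≥0∞ :=
  ⨆ (n : ℕ) (x : Matrix (Fin N × Fin (n + 1)) (Fin N × Fin (n + 1)) ℂ)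
    (_ : pisierNorm p x ≤ 1), ENNReal.ofReal (pisierNorm p (amp u x))

/-- Pisier's norm `ρ_p` on `M_n ⊗ M_m` (with `q` the conjugate exponent `p'`):
the infimum of `‖γ‖_{S_{2p}} ‖α‖_{S_{2p'}} ‖g‖_{S_∞} ‖δ‖_{S_{2p}} ‖β‖_{S_{2p'}}`
over factorizations `a = (γ ⊗ α) · g · (δ ⊗ β)`. -/
def rho (p q : ℝ≥0∞) {n m : ℕ} (a : Matrix (Fin n × Fin m) (Fin n × Fin m) ℂ) : ℝ :=
  sInf { r | ∃ (γ δ : Matrix (Fin n) (Fin n) ℂ) (α β : Matrix (Fin m) (Fin m) ℂ)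
      (g : Matrix (Fin n × Fin m) (Fin n × Fin m) ℂ),
      a = (γ ⊗ₖ α) * g * (δ ⊗ₖ β) ∧
      r = schattenNorm (2 * p) γ * schattenNorm (2 * q) α * opNorm g *
          schattenNorm (2 * p) δ * schattenNorm (2 * q) β }

/-- The amplification `u ⊗ id_{M_n}` of a map `u` defined only on a subspace `S ⊆ M_N`,
applied to an element of `M_N ⊗ M_n` all of whose `M_N`-valued block entries lie in `S`. -/
def ampOn {N m n : ℕ} (S : Submodule ℂ (Matrix (Fin N) (Fin N) ℂ))
    (u : S →ₗ[ℂ] Matrix (Fin m) (Fin m) ℂ)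
    (x : Matrix (Fin N × Fin n) (Fin N × Fin n) ℂ)
    (h : ∀ k l : Fin n, (Matrix.of fun i j => x (i, k) (j, l)) ∈ S) :
    Matrix (Fin m × Fin n) (Fin m × Fin n) ℂ :=
  Matrix.of fun ik jl => u ⟨Matrix.of fun i j => x (i, ik.2) (j, jl.2), h ik.2 jl.2⟩ ik.1 jl.1

end

/-!
Multiplying the second leg by `α` and `β` turns `(γ ⊗ 1) g (δ ⊗ 1)` into `(γ ⊗ α) g (δ ⊗ β)` and
commutes with `u ⊗ id`. Since `|T((1 ⊗ α) z (1 ⊗ β))|` is at most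
`‖α‖_{S_{2p'}} ‖β‖_{S_{2p'}} ‖z‖_{S_p[M_m]}`, this bounds `|T ∘ (u ⊗ id)|` by `‖u‖_r ρ_p`.

Conversely, `‖z‖_{S_p[M_k]} ≤ K` as soon as some `[[P ⊗ 1, z], [zᴴ, Q ⊗ 1]]` is positive, with `P`
and `Q` positive of `S_p`-norm at most `K`. If there is no such pair, the Hahn–Banach theorem gives
a positive functional that is negative on all these block matrices. Such a functional is described
by vectors `ξ r`, `η r`, regrouped as operators `X`, `Y : ℂᵐ → ℂᵏ ⊗ ℂᴸ`; optimising over `P` and `Q`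
brings in the `S_{2p'}`-norms of their absolute values `A`, `B`, and the off-diagonal term is
`T((id ⊗ Θ)(z))` with `Θ w = Xᴴ (w ⊗ 1) Y`. The polar decompositions `X = V A` and `Y = W B` show
that `id ⊗ Θ` maps `(γ ⊗ 1) y (δ ⊗ 1)` to `(γ ⊗ Aᴴ) g (δ ⊗ B)` with `‖g‖ ≤ ‖y‖`, and `id ⊗ Θ`
commutes with `u ⊗ id`. Thus a bound for `T ∘ (u ⊗ id)` relative to `ρ_p` contradicts
`z = (u ⊗ id) x` having too large a norm.
-/

noncomputable section RegularNorm

section EllP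

variable {ι : Type*} [Fintype ι] {p q : ℝ≥0∞}

lemma norm_toLp_permMatrix_mulVec [DecidableEq ι] (hp : 1 ≤ p) (σ : Equiv.Perm ι) (v : ι → ℝ) :
    ‖WithLp.toLp p (σ.permMatrix ℝ *ᵥ v)‖ = ‖WithLp.toLp p v‖ := by
  have := Fact.mk hp
  rw [permMatrix_mulVec]
  exact (LinearIsometryEquiv.piLpCongrLeft p ℝ ℝ σ.symm).norm_map (WithLp.toLp p v)

lemma norm_toLp_mulVec_le_of_mem_doublyStochastic [DecidableEq ι] (hp : 1 ≤ p)
    {D : Matrix ι ι ℝ} (hD : D ∈ doublyStochastic ℝ ι) (v : ι → ℝ) :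
    ‖WithLp.toLp p (D *ᵥ v)‖ ≤ ‖WithLp.toLp p v‖ := by
  have := Fact.mk hp
  let φ : Matrix ι ι ℝ →ₗ[ℝ] PiLp p fun _ : ι => ℝ :=
    (WithLp.linearEquiv p ℝ (ι → ℝ)).symm.toLinearMap ∘ₗ (mulVecBilin ℝ ℝ).flip v
  rw [← SetLike.mem_coe, doublyStochastic_eq_convexHull_permMatrix] at hD
  obtain ⟨_, ⟨σ, rfl⟩, hσ⟩ :=
    (convexOn_univ_norm.comp_linearMap φ).exists_ge_of_mem_convexHull (by simp) hD
  exact hσ.trans_eq (norm_toLp_permMatrix_mulVec hp σ v)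

lemma dotProduct_le_norm_toLp_top_mul (v w : ι → ℝ) :
    v ⬝ᵥ w ≤ ‖WithLp.toLp ∞ v‖ * ‖WithLp.toLp 1 w‖ := by
  rw [PiLp.norm_toLp, PiLp.norm_eq_of_L1, Finset.mul_sum]
  refine Finset.sum_le_sum fun i _ => (le_abs_self _).trans ?_
  rw [abs_mul]
  gcongr
  · exact norm_le_pi_norm v i
  · exact le_rfl

lemma dotProduct_le_norm_toLp_mul [hpq : p.HolderConjugate q] (v w : ι → ℝ) :
    v ⬝ᵥ w ≤ ‖WithLp.toLp p v‖ * ‖WithLp.toLp q w‖ := by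
  rcases eq_or_ne p ∞ with rfl | hp
  · obtain rfl := (ENNReal.HolderConjugate.eq_top_iff_eq_one ∞ q).1 rfl
    exact dotProduct_le_norm_toLp_top_mul v w
  rcases eq_or_ne q ∞ with rfl | hq
  · obtain rfl := (ENNReal.HolderConjugate.eq_top_iff_eq_one ∞ p).1 rfl
    rw [dotProduct_comm, mul_comm]
    exact dotProduct_le_norm_toLp_top_mul w v
  have h := ENNReal.HolderConjugate.toReal_of_ne_top hp hq
  rw [PiLp.norm_eq_sum h.pos, PiLp.norm_eq_sum h.symm.pos]
  exact Real.inner_le_Lp_mul_Lq Finset.univ v w h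

lemma exists_dotProduct_eq_norm_toLp_top {v : ι → ℝ} (hv : 0 ≤ v) :
    ∃ w : ι → ℝ, 0 ≤ w ∧ ‖WithLp.toLp 1 w‖ ≤ 1 ∧ v ⬝ᵥ w = ‖WithLp.toLp ∞ v‖ := by
  rw [PiLp.norm_toLp]
  rcases isEmpty_or_nonempty ι with hι | hι
  · exact ⟨0, le_rfl, by simp, by simp [Subsingleton.elim v 0]⟩
  obtain ⟨i, hmax⟩ := Finite.exists_max fun i => ‖v i‖
  have hi : v i = ‖v‖ := by
    rw [← Real.norm_of_nonneg (hv i)]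
    exact (norm_le_pi_norm v i).antisymm ((pi_norm_le_iff_of_nonneg (norm_nonneg _)).2 hmax)
  exact ⟨Pi.single i 1, Pi.single_nonneg.2 zero_le_one, by simp, by simpa using hi⟩

lemma exists_dotProduct_eq_norm_toLp [p.HolderConjugate q] {v : ι → ℝ} (hv : 0 ≤ v) :
    ∃ w : ι → ℝ, 0 ≤ w ∧ ‖WithLp.toLp q w‖ ≤ 1 ∧ v ⬝ᵥ w = ‖WithLp.toLp p v‖ := by
  rcases eq_or_ne p ∞ with rfl | hp
  · obtain rfl := (ENNReal.HolderConjugate.eq_top_iff_eq_one ∞ q).1 rfl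
    exact exists_dotProduct_eq_norm_toLp_top hv
  rcases eq_or_ne q ∞ with rfl | hq
  · obtain rfl := (ENNReal.HolderConjugate.eq_top_iff_eq_one ∞ p).1 rfl
    refine ⟨1, zero_le_one, ?_, ?_⟩
    · exact (PiLp.norm_toLp _).trans_le ((pi_norm_le_iff_of_nonneg zero_le_one).2 (by simp))
    · simp [PiLp.norm_eq_of_L1, dotProduct, abs_of_nonneg (hv _)]
  have h := ENNReal.HolderConjugate.toReal_of_ne_top hp hq
  lift v to ι → NNReal using hv
  obtain ⟨w, hw, hvw⟩ := (NNReal.isGreatest_Lp Finset.univ v h).1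
  refine ⟨fun i => w i, fun i => (w i).2, ?_, ?_⟩
  · rw [PiLp.norm_eq_sum h.symm.pos]
    have hw' : ∑ i, ‖(w i : ℝ)‖ ^ q.toReal ≤ 1 := by simpa using mod_cast hw
    exact Real.rpow_le_one (by positivity) hw' (one_div_nonneg.2 h.symm.nonneg)
  · rw [PiLp.norm_eq_sum h.pos]
    simpa [dotProduct] using congrArg NNReal.toReal hvw

end EllP

section UnitaryDiagonalization

variable {ι : Type*} [Fintype ι] [DecidableEq ι]

lemma map_normSq_mem_doublyStochastic {U : Matrix ι ι ℂ} (hU : U ∈ unitaryGroup ι ℂ) :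
    U.map Complex.normSq ∈ doublyStochastic ℝ ι := by
  refine mem_doublyStochastic_iff_sum.2 ⟨fun i j => Complex.normSq_nonneg _, fun i => ?_,
    fun j => ?_⟩
  · have h := congrFun₂ (mem_unitaryGroup_iff.1 hU) i i
    simp only [mul_apply, star_apply, RCLike.star_def, Complex.mul_conj, one_apply_eq] at h
    exact mod_cast h
  · have h := congrFun₂ (mem_unitaryGroup_iff'.1 hU) j j
    simp only [mul_apply, star_apply, RCLike.star_def, mul_comm (starRingEnd ℂ _),
      Complex.mul_conj, one_apply_eq] at h
    exact mod_cast h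

lemma mul_diagonal_mul_conjTranspose_apply_self (U : Matrix ι ι ℂ) (v : ι → ℝ) (i : ι) :
    (U * diagonal (fun j => (v j : ℂ)) * Uᴴ) i i = ((U.map Complex.normSq *ᵥ v) i : ℝ) := by
  rw [mul_apply]
  simp only [mul_diagonal, conjTranspose_apply, RCLike.star_def, mulVec, dotProduct,
    map_apply, Complex.ofReal_sum, Complex.ofReal_mul, Complex.normSq_eq_conj_mul_self]
  exact Finset.sum_congr rfl fun j _ => by ring

lemma trace_mul_diagonal_mul_conjTranspose (U V : Matrix ι ι ℂ) (v w : ι → ℝ) :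
    trace (U * diagonal (fun i => (v i : ℂ)) * Uᴴ * (V * diagonal (fun i => (w i : ℂ)) * Vᴴ)) =
      (v ⬝ᵥ ((Uᴴ * V).map Complex.normSq *ᵥ w) : ℝ) := by
  calc _ = trace (diagonal (fun i => (v i : ℂ)) *
          (Uᴴ * V * diagonal (fun i => (w i : ℂ)) * (Uᴴ * V)ᴴ)) := by
        rw [conjTranspose_mul, conjTranspose_conjTranspose, Matrix.mul_assoc U, Matrix.mul_assoc U,
          trace_mul_comm U]
        simp only [Matrix.mul_assoc]
    _ = _ := by
        rw [trace]
        simp only [diag_apply, diagonal_mul, mul_diagonal_mul_conjTranspose_apply_self, dotProduct]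
        push_cast
        rfl

lemma eq_map_normSq_mulVec {U V : Matrix ι ι ℂ} (hU : U ∈ unitaryGroup ι ℂ) {v w : ι → ℝ}
    (h : U * diagonal (fun i => (v i : ℂ)) * Uᴴ = V * diagonal (fun i => (w i : ℂ)) * Vᴴ) :
    v = (Uᴴ * V).map Complex.normSq *ᵥ w := by
  have hU' : Uᴴ * U = 1 := mem_unitaryGroup_iff'.1 hU
  have hd : diagonal (fun i => (v i : ℂ)) =
      Uᴴ * V * diagonal (fun i => (w i : ℂ)) * (Uᴴ * V)ᴴ := by
    calc _ = Uᴴ * U * diagonal (fun i => (v i : ℂ)) * (Uᴴ * U) := by simp [hU']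
      _ = Uᴴ * (U * diagonal (fun i => (v i : ℂ)) * Uᴴ) * U := by simp only [Matrix.mul_assoc]
      _ = _ := by rw [h]; simp [Matrix.mul_assoc]
  funext i
  have hi := congrFun₂ hd i i
  rw [mul_diagonal_mul_conjTranspose_apply_self, diagonal_apply_eq] at hi
  exact mod_cast hi

lemma conjTranspose_mul_mem_unitaryGroup {U V : Matrix ι ι ℂ} (hU : U ∈ unitaryGroup ι ℂ)
    (hV : V ∈ unitaryGroup ι ℂ) : Uᴴ * V ∈ unitaryGroup ι ℂ :=
  mul_mem (Unitary.star_mem hU) hV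

end UnitaryDiagonalization

section Schatten

open scoped Matrix.Norms.L2Operator

variable {ι : Type} [Fintype ι] [DecidableEq ι] {p q : ℝ≥0∞}

lemma opNorm_eq_norm (a : Matrix ι ι ℂ) : opNorm a = ‖a‖ := rfl

/-- The eigenvalues of `aᴴ * a`, that is, the squares of the singular values of `a`. -/
def gramEigenvalues (a : Matrix ι ι ℂ) : ι → ℝ :=
  (posSemidef_conjTranspose_mul_self a).isHermitian.eigenvalues

lemma gramEigenvalues_nonneg (a : Matrix ι ι ℂ) : 0 ≤ gramEigenvalues a :=
  (posSemidef_conjTranspose_mul_self a).eigenvalues_nonneg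

lemma exists_unitary_conjTranspose_mul_self_eq (a : Matrix ι ι ℂ) : ∃ U ∈ unitaryGroup ι ℂ,
    aᴴ * a = U * diagonal (fun i => (gramEigenvalues a i : ℂ)) * Uᴴ := by
  have h := (posSemidef_conjTranspose_mul_self a).isHermitian
  exact ⟨h.eigenvectorUnitary, h.eigenvectorUnitary.2, h.spectral_theorem⟩

lemma opNorm_sq (a : Matrix ι ι ℂ) : opNorm a ^ 2 = ‖gramEigenvalues a‖ := by
  obtain ⟨U, hU, ha⟩ := exists_unitary_conjTranspose_mul_self_eq a
  rw [opNorm_eq_norm, sq, ← l2_opNorm_conjTranspose_mul_self, ha, ← star_eq_conjTranspose,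
    CStarRing.norm_mul_mem_unitary _ (Unitary.star_mem hU), CStarRing.norm_mem_unitary_mul _ hU,
    l2_opNorm_diagonal]
  simp [Pi.norm_def]

lemma schattenNorm_nonneg (p : ℝ≥0∞) (a : Matrix ι ι ℂ) : 0 ≤ schattenNorm p a := by
  unfold schattenNorm
  split_ifs
  · exact norm_nonneg _
  · positivity

lemma schattenNorm_eq_sum (hp : p ≠ ∞) (a : Matrix ι ι ℂ) : schattenNorm p a =
    (∑ i, √(gramEigenvalues a i) ^ p.toReal) ^ (1 / p.toReal) :=
  if_neg hp

lemma schattenNorm_two_mul_sq (hp : p ≠ 0) (a : Matrix ι ι ℂ) :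
    schattenNorm (2 * p) a ^ 2 = ‖WithLp.toLp p (gramEigenvalues a)‖ := by
  rcases eq_or_ne p ∞ with rfl | hp'
  · rw [schattenNorm, if_pos (by simp), PiLp.norm_toLp, opNorm_sq]
  have hpos := ENNReal.toReal_pos hp hp'
  have hs (i : ι) : √(gramEigenvalues a i) ^ (2 * p).toReal = ‖gramEigenvalues a i‖ ^ p.toReal := by
    rw [ENNReal.toReal_mul, ENNReal.toReal_ofNat, Real.rpow_mul (Real.sqrt_nonneg _),
      Real.rpow_two, Real.sq_sqrt (gramEigenvalues_nonneg a i),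
      Real.norm_of_nonneg (gramEigenvalues_nonneg a i)]
  calc schattenNorm (2 * p) a ^ 2
      = ((∑ i, √(gramEigenvalues a i) ^ (2 * p).toReal) ^ (1 / (2 * p).toReal)) ^ 2 := by
        rw [schattenNorm_eq_sum (by simp [ENNReal.mul_eq_top, hp'])]
    _ = (∑ i, ‖gramEigenvalues a i‖ ^ p.toReal) ^ (1 / p.toReal) := by
        rw [Finset.sum_congr rfl fun i _ => hs i, ← Real.rpow_mul_natCast (by positivity)]
        congr 1
        simp
    _ = _ := by rw [PiLp.norm_eq_sum hpos]

lemma schattenNorm_two_mul_congr (hp : p ≠ 0) {a b : Matrix ι ι ℂ}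
    (h : (aᴴ * a).charpoly = (bᴴ * b).charpoly) :
    schattenNorm (2 * p) a = schattenNorm (2 * p) b := by
  have h' : gramEigenvalues a = gramEigenvalues b :=
    (IsHermitian.eigenvalues_eq_eigenvalues_iff _ _).2 h
  rw [← sq_eq_sq₀ (schattenNorm_nonneg _ _) (schattenNorm_nonneg _ _),
    schattenNorm_two_mul_sq hp, schattenNorm_two_mul_sq hp, h']

lemma schattenNorm_two_mul_conjTranspose (hp : p ≠ 0) (a : Matrix ι ι ℂ) :
    schattenNorm (2 * p) aᴴ = schattenNorm (2 * p) a :=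
  schattenNorm_two_mul_congr hp (by rw [charpoly_mul_comm, conjTranspose_conjTranspose])

lemma schattenNorm_two_mul_transpose (hp : p ≠ 0) (a : Matrix ι ι ℂ) :
    schattenNorm (2 * p) aᵀ = schattenNorm (2 * p) a :=
  schattenNorm_two_mul_congr hp <| by
    rw [conjTranspose_transpose_eq_transpose_conjTranspose, ← transpose_mul,
      charpoly_transpose, charpoly_mul_comm]

lemma opNorm_le_schattenNorm (hp : 1 ≤ p) (a : Matrix ι ι ℂ) :
    opNorm a ≤ schattenNorm (2 * p) a := by
  have := Fact.mk hp
  refine le_of_sq_le_sq ?_ (schattenNorm_nonneg _ _)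
  rw [opNorm_sq, schattenNorm_two_mul_sq (zero_lt_one.trans_le hp).ne']
  exact (pi_norm_le_iff_of_nonneg (norm_nonneg _)).2
    (PiLp.norm_apply_le (WithLp.toLp p (gramEigenvalues a)))

lemma schattenNorm_two_mul_sq_le (hp : 1 ≤ p) {a V : Matrix ι ι ℂ} {v : ι → ℝ}
    (hV : V ∈ unitaryGroup ι ℂ) (h : aᴴ * a = V * diagonal (fun i => (v i : ℂ)) * Vᴴ) :
    schattenNorm (2 * p) a ^ 2 ≤ ‖WithLp.toLp p v‖ := by
  obtain ⟨U, hU, ha⟩ := exists_unitary_conjTranspose_mul_self_eq a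
  rw [schattenNorm_two_mul_sq (zero_lt_one.trans_le hp).ne',
    eq_map_normSq_mulVec hU (ha.symm.trans h)]
  exact norm_toLp_mulVec_le_of_mem_doublyStochastic hp
    (map_normSq_mem_doublyStochastic (conjTranspose_mul_mem_unitaryGroup hU hV)) v

lemma re_trace_gram_mul_gram_le [p.HolderConjugate q] (a b : Matrix ι ι ℂ) :
    (trace (aᴴ * a * (bᴴ * b))).re ≤ schattenNorm (2 * p) a ^ 2 * schattenNorm (2 * q) b ^ 2 := by
  obtain ⟨U, hU, ha⟩ := exists_unitary_conjTranspose_mul_self_eq a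
  obtain ⟨V, hV, hb⟩ := exists_unitary_conjTranspose_mul_self_eq b
  rw [schattenNorm_two_mul_sq (ENNReal.HolderConjugate.ne_zero p q),
    schattenNorm_two_mul_sq (ENNReal.HolderConjugate.ne_zero q p), ha, hb,
    trace_mul_diagonal_mul_conjTranspose, Complex.ofReal_re]
  refine (dotProduct_le_norm_toLp_mul (p := p) (q := q) _ _).trans ?_
  have := Fact.mk (ENNReal.HolderConjugate.one_le p q)
  gcongr
  exact norm_toLp_mulVec_le_of_mem_doublyStochastic (ENNReal.HolderConjugate.one_le q p)
    (map_normSq_mem_doublyStochastic (conjTranspose_mul_mem_unitaryGroup hU hV)) _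

lemma exists_re_trace_gram_mul_gram_eq [p.HolderConjugate q] (a : Matrix ι ι ℂ) :
    ∃ b : Matrix ι ι ℂ, schattenNorm (2 * q) b ^ 2 ≤ 1 ∧
      (trace (aᴴ * a * (bᴴ * b))).re = schattenNorm (2 * p) a ^ 2 := by
  obtain ⟨U, hU, ha⟩ := exists_unitary_conjTranspose_mul_self_eq a
  obtain ⟨w, hw, hw₁, hvw⟩ :=
    exists_dotProduct_eq_norm_toLp (p := p) (q := q) (gramEigenvalues_nonneg a)
  have hU' : Uᴴ * U = 1 := mem_unitaryGroup_iff'.1 hU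
  let b := diagonal (fun i => (√(w i) : ℂ)) * Uᴴ
  have hb : bᴴ * b = U * diagonal (fun i => (w i : ℂ)) * Uᴴ := by
    have hd : (diagonal fun i => (√(w i) : ℂ))ᴴ * (diagonal fun i => (√(w i) : ℂ)) =
        diagonal fun i => (w i : ℂ) := by
      simp [diagonal_conjTranspose, diagonal_mul_diagonal, ← Complex.ofReal_mul,
        Real.mul_self_sqrt (hw _), Pi.star_def]
    simp only [b, conjTranspose_mul, conjTranspose_conjTranspose, Matrix.mul_assoc, ← hd]
  refine ⟨b, (schattenNorm_two_mul_sq_le (ENNReal.HolderConjugate.one_le q p) hU hb).trans hw₁, ?_⟩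
  rw [schattenNorm_two_mul_sq (ENNReal.HolderConjugate.ne_zero p q), ha, hb,
    trace_mul_diagonal_mul_conjTranspose, Complex.ofReal_re, hU', ← hvw]
  congr 1
  simp [map_one]

end Schatten

section PosSemidef

variable {ι κ : Type*} [Fintype ι] [Fintype κ]

open scoped MatrixOrder Matrix.Norms.L2Operator in
lemma isClosed_posSemidef {n : Type*} [Finite n] : IsClosed {X : Matrix n n ℂ | X.PosSemidef} := by
  cases nonempty_fintype n
  simpa only [nonneg_iff_posSemidef] using CStarAlgebra.isClosed_nonneg (A := Matrix n n ℂ)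

open scoped MatrixOrder in
lemma exists_eq_conjTranspose_mul_of_posSemidef {X : Matrix ι ι ℂ} (hX : X.PosSemidef) :
    ∃ M : Matrix ι ι ℂ, X = Mᴴ * M :=
  CStarAlgebra.nonneg_iff_eq_star_mul_self.1 hX.nonneg

lemma exists_eq_trace_mul {R : Type*} [CommSemiring R] (f : Matrix ι κ R →ₗ[R] R) :
    ∃ G : Matrix κ ι R, ∀ X, f X = trace (G * X) := by
  classical
  let G : Matrix κ ι R := of fun j i => f (single i j 1)
  have h : f = traceLinearMap κ R R ∘ₗ mulLeftLinearMap κ R G := by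
    refine ext_linearMap R fun i j => LinearMap.ext_ring ?_
    simp [G, trace_mul_single]
  exact ⟨G, LinearMap.congr_fun h⟩

lemma re_trace_mul_eq_of_isHermitian (G : Matrix ι ι ℂ) {X : Matrix ι ι ℂ} (hX : X.IsHermitian) :
    (trace (G * X)).re = (trace ((2⁻¹ : ℝ) • (G + Gᴴ) * X)).re := by
  have h : trace (Gᴴ * X) = star (trace (G * X)) := by
    rw [← trace_conjTranspose, conjTranspose_mul, hX.eq, trace_mul_comm]
  rw [Matrix.smul_mul, trace_smul, Matrix.add_mul, trace_add, h]
  simp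
  ring

lemma exists_forall_re_trace_mul_eq {G : Matrix ι ι ℂ}
    (hG : ∀ X : Matrix ι ι ℂ, X.PosSemidef → 0 ≤ (trace (G * X)).re) :
    ∃ M : Matrix ι ι ℂ, ∀ X : Matrix ι ι ℂ, X.IsHermitian →
      (trace (G * X)).re = (trace (Mᴴ * X * M)).re := by
  have hH : ((2⁻¹ : ℝ) • (G + Gᴴ)).IsHermitian := by
    simp [IsHermitian, conjTranspose_smul, add_comm]
  have hpos : ((2⁻¹ : ℝ) • (G + Gᴴ)).PosSemidef := by
    refine .of_dotProduct_mulVec_nonneg hH fun x => ?_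
    rw [Complex.le_def]
    refine ⟨?_, (hH.im_star_dotProduct_mulVec_self x).symm⟩
    have hx := hG _ (posSemidef_vecMulVec_self_star x)
    rwa [re_trace_mul_eq_of_isHermitian _ (posSemidef_vecMulVec_self_star x).1, mul_vecMulVec,
      trace_vecMulVec, dotProduct_comm] at hx
  obtain ⟨M, hM⟩ := exists_eq_conjTranspose_mul_of_posSemidef hpos
  exact ⟨Mᴴ, fun X hX => by
    rw [re_trace_mul_eq_of_isHermitian G hX, hM, trace_mul_comm, conjTranspose_conjTranspose,
      Matrix.mul_assoc, trace_mul_comm M, Matrix.mul_assoc]⟩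

open scoped MatrixOrder Matrix.Norms.L2Operator in
lemma exists_forall_re_trace_neg {S : Set (Matrix ι ι ℂ)} (hconv : Convex ℝ S)
    (hcomp : IsCompact S) (hherm : ∀ X ∈ S, X.IsHermitian) (hS : ∀ X ∈ S, ¬X.PosSemidef) :
    ∃ M : Matrix ι ι ℂ, ∀ X ∈ S, (trace (Mᴴ * X * M)).re < 0 := by
  have hdisj : Disjoint S (ProperCone.positive ℝ (Matrix ι ι ℂ)) :=
    Set.disjoint_left.2 fun X hX hX' => hS X hX (LE.le.posSemidef hX')
  obtain ⟨f, hf, hfS⟩ := ProperCone.hyperplane_separation _ hconv hcomp hdisj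
  obtain ⟨G, hG⟩ := exists_eq_trace_mul (f.extendRCLikeₗ (𝕜 := ℂ)).toLinearMap
  have hfG (X : Matrix ι ι ℂ) : f X = (trace (G * X)).re := by
    rw [← hG X]
    exact (StrongDual.re_extendRCLike_apply (𝕜 := ℂ) f X).symm
  obtain ⟨M, hM⟩ := exists_forall_re_trace_mul_eq fun X hX => hfG X ▸ hf X hX.nonneg
  exact ⟨M, fun X hX => by rw [← hM X (hherm X hX), ← hfG]; exact hfS X hX⟩

end PosSemidef

section Factorization

open scoped Matrix.Norms.L2Operator

variable {ι κ μ : Type*} [Fintype κ] [Fintype μ] [DecidableEq μ]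

lemma exists_pseudoinverse_of_isHermitian [Fintype ι] {S : Matrix ι ι ℂ} (hS : S.IsHermitian) :
    ∃ G : Matrix ι ι ℂ, G.IsHermitian ∧ S * G * S = S ∧ G * S * G = G := by
  have hS' : IsSelfAdjoint S := hS
  have hcont (f : ℝ → ℝ) : ContinuousOn f (spectrum ℝ S) := S.finite_real_spectrum.continuousOn f
  have hmul (f g h : ℝ → ℝ) : cfc f S * cfc g S * cfc h S = cfc (fun x => f x * g x * h x) S := by
    rw [← cfc_mul f g S (hcont _) (hcont _), ← cfc_mul _ h S (hcont _) (hcont _)]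
  refine ⟨cfc (·⁻¹ : ℝ → ℝ) S, cfc_predicate _ S, ?_, ?_⟩
  · calc S * cfc (·⁻¹ : ℝ → ℝ) S * S
        = cfc id S * cfc (·⁻¹ : ℝ → ℝ) S * cfc id S := by rw [cfc_id ℝ S]
      _ = cfc id S := by simp only [hmul, mul_inv_mul_cancel, Function.id_def]
      _ = S := cfc_id ℝ S
  · calc cfc (·⁻¹ : ℝ → ℝ) S * S * cfc (·⁻¹ : ℝ → ℝ) S
        = cfc (·⁻¹ : ℝ → ℝ) S * cfc id S * cfc (·⁻¹ : ℝ → ℝ) S := by rw [cfc_id ℝ S]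
      _ = cfc (·⁻¹ : ℝ → ℝ) S := by
          rw [hmul]
          congr 1
          funext x
          simpa using mul_inv_mul_cancel x⁻¹

lemma norm_le_one_of_isStarProjection_mul_conjTranspose {V : Matrix κ μ ℂ}
    (hV : IsStarProjection (V * Vᴴ)) : ‖V‖ ≤ 1 := by
  have h := l2_opNorm_conjTranspose_mul_self Vᴴ
  rw [conjTranspose_conjTranspose, l2_opNorm_conjTranspose] at h
  exact (abs_le_one_iff_mul_self_le_one.2 (h ▸ hV.norm_le)).trans' (le_abs_self _)

lemma exists_contraction_eq_mul [Finite ι] {ξ : Matrix κ ι ℂ} {A : Matrix μ ι ℂ}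
    (h : ξᴴ * ξ = Aᴴ * A) : ∃ V : Matrix κ μ ℂ, ξ = V * A ∧ ‖V‖ ≤ 1 := by
  cases nonempty_fintype ι
  obtain ⟨G, hG, hSGS, hGSG⟩ :=
    exists_pseudoinverse_of_isHermitian (isHermitian_conjTranspose_mul_self ξ)
  have hξ : ξ * (1 - G * (ξᴴ * ξ)) = 0 := by
    refine conjTranspose_mul_self_eq_zero.1 ?_
    rw [conjTranspose_mul, Matrix.mul_assoc, ← Matrix.mul_assoc ξᴴ, Matrix.mul_sub,
      Matrix.mul_one, ← Matrix.mul_assoc (ξᴴ * ξ), hSGS, sub_self, Matrix.mul_zero]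
  have hproj : ξ * G * Aᴴ * (ξ * G * Aᴴ)ᴴ = ξ * G * ξᴴ := by
    calc _ = ξ * (G * (Aᴴ * A) * G) * ξᴴ := by
          simp only [conjTranspose_mul, conjTranspose_conjTranspose, hG.eq, Matrix.mul_assoc]
      _ = _ := by rw [← h, hGSG]
  refine ⟨ξ * G * Aᴴ, ?_, norm_le_one_of_isStarProjection_mul_conjTranspose ?_⟩
  · rw [Matrix.mul_assoc, ← h, Matrix.mul_assoc]
    rwa [Matrix.mul_sub, Matrix.mul_one, sub_eq_zero] at hξ
  rw [hproj]
  refine ⟨?_, isHermitian_mul_mul_conjTranspose ξ hG⟩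
  calc ξ * G * ξᴴ * (ξ * G * ξᴴ) = ξ * (G * (ξᴴ * ξ) * G) * ξᴴ := by
        simp only [Matrix.mul_assoc]
    _ = ξ * G * ξᴴ := by rw [hGSG]

end Factorization

section OperatorNorm

open scoped Matrix.Norms.L2Operator

variable {ι κ μ : Type*} [Fintype ι] [Fintype κ] [Fintype μ] [DecidableEq μ]

lemma norm_dotProduct_mulVec_le [DecidableEq κ] (v : ι → ℂ) (y : Matrix ι κ ℂ) (w : κ → ℂ) :
    ‖v ⬝ᵥ y *ᵥ w‖ ≤ ‖WithLp.toLp 2 v‖ * (‖y‖ * ‖WithLp.toLp 2 w‖) := by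
  calc ‖v ⬝ᵥ y *ᵥ w‖
      = ‖inner ℂ (WithLp.toLp 2 (star v)) (WithLp.toLp 2 (y *ᵥ w))‖ := by
        rw [EuclideanSpace.inner_toLp_toLp, star_star, dotProduct_comm]
    _ ≤ ‖WithLp.toLp 2 (star v)‖ * ‖WithLp.toLp 2 (y *ᵥ w)‖ := norm_inner_le_norm _ _
    _ = ‖WithLp.toLp 2 v‖ * ‖WithLp.toLp 2 (y *ᵥ w)‖ := by simp [EuclideanSpace.norm_eq]
    _ ≤ _ := by
        gcongr
        exact l2_opNorm_mulVec y (WithLp.toLp 2 w)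

lemma norm_kronecker_one_submatrix_le {ν : Type*} [Finite ν] [DecidableEq ν] [DecidableEq ι]
    (e : μ ≃ ι × ν) (y : Matrix ι ι ℂ) :
    ‖(y ⊗ₖ (1 : Matrix ν ν ℂ)).submatrix e e‖ ≤ ‖y‖ :=
  have := Fintype.ofFinite ν
  let F : Matrix ι ι ℂ →⋆ₐ[ℂ] Matrix μ μ ℂ :=
    { toFun := fun y => (y ⊗ₖ (1 : Matrix ν ν ℂ)).submatrix e e
      map_one' := by simp
      map_mul' := fun a b => by rw [submatrix_mul_equiv, ← mul_kronecker_mul, Matrix.one_mul]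
      map_zero' := by simp
      map_add' := fun a b => by rw [add_kronecker, submatrix_add, Pi.add_apply, Pi.add_apply]
      commutes' := fun r => by simp [Algebra.algebraMap_eq_smul_one, smul_kronecker, submatrix_smul]
      map_star' := fun a => by
        simp [star_eq_conjTranspose, conjTranspose_kronecker, conjTranspose_submatrix] }
  NonUnitalStarAlgHom.norm_apply_le F y

lemma norm_one_kronecker_le [DecidableEq ι] (V : Matrix κ μ ℂ) :
    ‖(1 : Matrix ι ι ℂ) ⊗ₖ V‖ ≤ ‖V‖ := by
  have hswap : ((1 : Matrix ι ι ℂ) ⊗ₖ V)ᴴ * ((1 : Matrix ι ι ℂ) ⊗ₖ V) =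
      ((Vᴴ * V) ⊗ₖ (1 : Matrix ι ι ℂ)).submatrix (Equiv.prodComm ι μ) (Equiv.prodComm ι μ) := by
    rw [conjTranspose_kronecker, ← mul_kronecker_mul, conjTranspose_one, Matrix.one_mul]
    ext ⟨i, a⟩ ⟨j, b⟩
    simp [mul_comm]
  refine abs_le_of_sq_le_sq' ?_ (norm_nonneg V) |>.2
  rw [sq, sq, ← l2_opNorm_conjTranspose_mul_self, ← l2_opNorm_conjTranspose_mul_self, hswap]
  exact norm_kronecker_one_submatrix_le _ _

end OperatorNorm

section Polar

open scoped Matrix.Norms.L2Operator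

variable {ι : Type} [Fintype ι] [DecidableEq ι] {p q : ℝ≥0∞}

lemma norm_toLp_vec_mul_le [p.HolderConjugate q] (a b : Matrix ι ι ℂ) :
    ‖WithLp.toLp 2 (vec (a * b))‖ ≤ schattenNorm (2 * p) a * schattenNorm (2 * q) b := by
  refine le_of_sq_le_sq ?_ (mul_nonneg (schattenNorm_nonneg _ a) (schattenNorm_nonneg _ b))
  calc ‖WithLp.toLp 2 (vec (a * b))‖ ^ 2 = (trace ((a * b)ᴴ * (a * b))).re := by
        rw [← star_vec_dotProduct_vec, @norm_sq_eq_re_inner ℂ, EuclideanSpace.inner_toLp_toLp,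
          dotProduct_comm]
        rfl
    _ = (trace (aᴴ * a * (bᴴᴴ * bᴴ))).re := by
        rw [conjTranspose_conjTranspose, conjTranspose_mul, Matrix.mul_assoc, trace_mul_comm]
        simp only [Matrix.mul_assoc]
    _ ≤ schattenNorm (2 * p) a ^ 2 * schattenNorm (2 * q) bᴴ ^ 2 := re_trace_gram_mul_gram_le _ _
    _ = _ := by
        rw [schattenNorm_two_mul_conjTranspose (ENNReal.HolderConjugate.ne_zero q p), mul_pow]

/-- The positive part of the polar, scaled by `K`, of the unit ball of `S_q`: writing the positive
elements of that ball as `bᴴ * b`, it consists of the positive semidefinite matrices of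
`S_p`-norm at most `K`, where `p` is the exponent conjugate to `q`. -/
def positivePolar (q : ℝ≥0∞) (K : ℝ) : Set (Matrix ι ι ℂ) :=
  {P | P.PosSemidef ∧ ∀ b : Matrix ι ι ℂ, schattenNorm (2 * q) b ^ 2 ≤ 1 →
    (trace (P * (bᴴ * b))).re ≤ K}

variable {K : ℝ}

lemma convex_positivePolar : Convex ℝ (positivePolar q K : Set (Matrix ι ι ℂ)) := by
  intro P hP Q hQ s t hs ht hst
  refine ⟨(hP.1.smul hs).add (hQ.1.smul ht), fun b hb => ?_⟩
  calc (trace ((s • P + t • Q) * (bᴴ * b))).re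
      = s * (trace (P * (bᴴ * b))).re + t * (trace (Q * (bᴴ * b))).re := by
        simp [Matrix.add_mul]
    _ ≤ s * K + t * K := by gcongr; exacts [hP.2 b hb, hQ.2 b hb]
    _ = K := by rw [← add_mul, hst, one_mul]

lemma isClosed_positivePolar : IsClosed (positivePolar q K : Set (Matrix ι ι ℂ)) := by
  simp only [positivePolar, Set.ofPred_and, Set.ofPred_forall]
  refine isClosed_posSemidef.inter (isClosed_iInter fun b => isClosed_iInter fun _ => ?_)
  exact isClosed_le (Complex.continuous_re.comp (by fun_prop)) continuous_const

lemma schattenNorm_sq_le_of_mem_positivePolar [p.HolderConjugate q] {A : Matrix ι ι ℂ}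
    (hA : Aᴴ * A ∈ positivePolar q K) : schattenNorm (2 * p) A ^ 2 ≤ K := by
  obtain ⟨b, hb, hAb⟩ := exists_re_trace_gram_mul_gram_eq (p := p) (q := q) A
  exact hAb ▸ hA.2 b hb

lemma norm_le_of_mem_positivePolar [p.HolderConjugate q] {P : Matrix ι ι ℂ}
    (hP : P ∈ positivePolar q K) : ‖P‖ ≤ K := by
  obtain ⟨A, rfl⟩ := exists_eq_conjTranspose_mul_of_posSemidef hP.1
  rw [l2_opNorm_conjTranspose_mul_self, ← sq, ← opNorm_eq_norm]
  refine le_trans ?_ (schattenNorm_sq_le_of_mem_positivePolar (p := p) hP)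
  gcongr
  exacts [norm_nonneg _, opNorm_le_schattenNorm (ENNReal.HolderConjugate.one_le p q) A]

lemma isCompact_positivePolar [p.HolderConjugate q] :
    IsCompact (positivePolar q K : Set (Matrix ι ι ℂ)) :=
  have : FiniteDimensional ℝ (Matrix ι ι ℂ) := FiniteDimensional.complexToReal _
  Metric.isCompact_of_isClosed_isBounded isClosed_positivePolar <|
    isBounded_iff_forall_norm_le.2 ⟨K, fun _ hP => norm_le_of_mem_positivePolar (p := p) hP⟩

lemma smul_conjTranspose_mul_self_mem_positivePolar [p.HolderConjugate q] (hK : 0 ≤ K)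
    {a : Matrix ι ι ℂ} (ha : schattenNorm (2 * p) a ^ 2 ≤ 1) :
    K • (aᴴ * a) ∈ positivePolar q K := by
  refine ⟨(posSemidef_conjTranspose_mul_self a).smul hK, fun b hb => ?_⟩
  have h := (re_trace_gram_mul_gram_le (p := p) (q := q) a b).trans
    (mul_le_one₀ ha (sq_nonneg _) hb)
  rw [Matrix.smul_mul, trace_smul, Complex.smul_re, smul_eq_mul]
  exact mul_le_of_le_one_right hK h

lemma transpose_mem_positivePolar (hq : q ≠ 0) {P : Matrix ι ι ℂ} (hP : P ∈ positivePolar q K) :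
    Pᵀ ∈ positivePolar q K := by
  refine ⟨hP.1.transpose, fun b hb => ?_⟩
  have hb' : (bᴴ * b)ᵀ = bᴴᵀᴴ * bᴴᵀ := by
    rw [transpose_mul, conjTranspose_transpose_eq_transpose_conjTranspose,
      conjTranspose_conjTranspose]
  rw [trace_mul_comm, ← trace_transpose_mul, hb', trace_mul_comm]
  refine hP.2 _ ?_
  rwa [schattenNorm_two_mul_transpose hq, schattenNorm_two_mul_conjTranspose hq]

end Polar

section Infimum

open scoped Matrix.Norms.L2Operator

lemma le_mul_csInf {S : Set ℝ} (hS : S.Nonempty) {C F : ℝ} (hC : 0 ≤ C)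
    (h : ∀ r ∈ S, F ≤ C * r) : F ≤ C * sInf S := by
  rcases hC.eq_or_lt with rfl | hC
  · obtain ⟨r, hr⟩ := hS
    simpa using h r hr
  · rw [← div_le_iff₀' hC]
    exact le_csInf hS fun r hr => (div_le_iff₀' hC).2 (h r hr)

lemma forall_le_one_imp_le_iff {E : Type*} [MulAction ℝ E] {N F : E → ℝ} (hN : ∀ x, 0 ≤ N x)
    (hN_smul : ∀ t : ℝ, 0 < t → ∀ x, N (t • x) ≤ t * N x)
    (hF_smul : ∀ t : ℝ, 0 < t → ∀ x, F (t • x) ≤ t * F x) {C : ℝ} (hC : 0 ≤ C) :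
    (∀ x, N x ≤ 1 → F x ≤ C) ↔ ∀ x, F x ≤ C * N x := by
  refine ⟨fun h x => ?_, fun h x hx => (h x).trans (mul_le_of_le_one_right hC hx)⟩
  have hlim : Filter.Tendsto (fun s => s * C) (nhdsWithin (N x) (Set.Ioi (N x)))
      (nhds (N x * C)) :=
    ((continuous_mul_const C).tendsto _).mono_left nhdsWithin_le_nhds
  rw [mul_comm]
  refine ge_of_tendsto hlim (Filter.eventually_of_mem self_mem_nhdsWithin fun s hs => ?_)
  have hs0 : 0 < s := (hN x).trans_lt hs
  have hx : N (s⁻¹ • x) ≤ 1 :=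
    (hN_smul _ (inv_pos.2 hs0) x).trans ((inv_mul_le_one₀ hs0).2 (Set.mem_Ioi.1 hs).le)
  calc F x = F (s • s⁻¹ • x) := by rw [smul_inv_smul₀ hs0.ne']
    _ ≤ s * F (s⁻¹ • x) := hF_smul s hs0 _
    _ ≤ s * C := by gcongr; exact h _ hx

lemma opNorm_smul {ι : Type} [Fintype ι] [DecidableEq ι] {t : ℝ} (ht : 0 ≤ t)
    (a : Matrix ι ι ℂ) : opNorm (t • a) = t * opNorm a := by
  rw [opNorm_eq_norm, opNorm_eq_norm, norm_smul, Real.norm_of_nonneg ht]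

variable {p q : ℝ≥0∞} {m n : ℕ}

lemma pisierNorm_value_nonneg (a b : Matrix (Fin m) (Fin m) ℂ)
    (y : Matrix (Fin m × Fin n) (Fin m × Fin n) ℂ) :
    0 ≤ schattenNorm (2 * p) a * opNorm y * schattenNorm (2 * p) b :=
  mul_nonneg (mul_nonneg (schattenNorm_nonneg _ _) (norm_nonneg _)) (schattenNorm_nonneg _ _)

lemma pisierNorm_nonneg (x : Matrix (Fin m × Fin n) (Fin m × Fin n) ℂ) : 0 ≤ pisierNorm p x :=
  Real.sInf_nonneg (by rintro _ ⟨a, b, y, -, rfl⟩; exact pisierNorm_value_nonneg a b y)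

lemma pisierNorm_mul_mul_le (a b : Matrix (Fin m) (Fin m) ℂ)
    (y : Matrix (Fin m × Fin n) (Fin m × Fin n) ℂ) :
    pisierNorm p ((a ⊗ₖ (1 : Matrix (Fin n) (Fin n) ℂ)) * y * (b ⊗ₖ 1)) ≤
      schattenNorm (2 * p) a * opNorm y * schattenNorm (2 * p) b :=
  csInf_le ⟨0, by rintro _ ⟨a, b, y, -, rfl⟩; exact pisierNorm_value_nonneg a b y⟩
    ⟨a, b, y, rfl, rfl⟩

lemma le_mul_pisierNorm {x : Matrix (Fin m × Fin n) (Fin m × Fin n) ℂ} {C F : ℝ} (hC : 0 ≤ C)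
    (h : ∀ (a b : Matrix (Fin m) (Fin m) ℂ) (y : Matrix (Fin m × Fin n) (Fin m × Fin n) ℂ),
      x = (a ⊗ₖ (1 : Matrix (Fin n) (Fin n) ℂ)) * y * (b ⊗ₖ (1 : Matrix (Fin n) (Fin n) ℂ)) →
      F ≤ C * (schattenNorm (2 * p) a * opNorm y * schattenNorm (2 * p) b)) :
    F ≤ C * pisierNorm p x := by
  refine le_mul_csInf ?_ hC ?_
  · exact ⟨_, 1, 1, x, by simp, rfl⟩
  · rintro _ ⟨a, b, y, hx, rfl⟩
    exact h a b y hx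

lemma pisierNorm_smul_le (t : ℝ) (ht : 0 < t) (x : Matrix (Fin m × Fin n) (Fin m × Fin n) ℂ) :
    pisierNorm p (t • x) ≤ t * pisierNorm p x := by
  refine le_mul_pisierNorm ht.le fun a b y hx => ?_
  rw [hx, ← Matrix.smul_mul, ← Matrix.mul_smul]
  refine (pisierNorm_mul_mul_le a b (t • y)).trans_eq ?_
  rw [opNorm_smul ht.le]
  ring

lemma rho_value_nonneg (γ δ : Matrix (Fin n) (Fin n) ℂ) (α β : Matrix (Fin m) (Fin m) ℂ)
    (g : Matrix (Fin n × Fin m) (Fin n × Fin m) ℂ) :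
    0 ≤ schattenNorm (2 * p) γ * schattenNorm (2 * q) α * opNorm g *
          schattenNorm (2 * p) δ * schattenNorm (2 * q) β := by
  have hγ := schattenNorm_nonneg (2 * p) γ
  have hα := schattenNorm_nonneg (2 * q) α
  have hδ := schattenNorm_nonneg (2 * p) δ
  have hβ := schattenNorm_nonneg (2 * q) β
  have hg : 0 ≤ opNorm g := norm_nonneg _
  positivity

lemma rho_nonneg (a : Matrix (Fin n × Fin m) (Fin n × Fin m) ℂ) : 0 ≤ rho p q a :=
  Real.sInf_nonneg (by rintro _ ⟨γ, δ, α, β, g, -, rfl⟩; exact rho_value_nonneg γ δ α β g)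

lemma rho_mul_mul_le (γ δ : Matrix (Fin n) (Fin n) ℂ) (α β : Matrix (Fin m) (Fin m) ℂ)
    (g : Matrix (Fin n × Fin m) (Fin n × Fin m) ℂ) :
    rho p q ((γ ⊗ₖ α) * g * (δ ⊗ₖ β)) ≤ schattenNorm (2 * p) γ * schattenNorm (2 * q) α *
      opNorm g * schattenNorm (2 * p) δ * schattenNorm (2 * q) β :=
  csInf_le ⟨0, by rintro _ ⟨γ, δ, α, β, g, -, rfl⟩; exact rho_value_nonneg γ δ α β g⟩
    ⟨γ, δ, α, β, g, rfl, rfl⟩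

lemma le_mul_rho {a : Matrix (Fin n × Fin m) (Fin n × Fin m) ℂ} {C F : ℝ} (hC : 0 ≤ C)
    (h : ∀ (γ δ : Matrix (Fin n) (Fin n) ℂ) (α β : Matrix (Fin m) (Fin m) ℂ)
      (g : Matrix (Fin n × Fin m) (Fin n × Fin m) ℂ), a = (γ ⊗ₖ α) * g * (δ ⊗ₖ β) →
      F ≤ C * (schattenNorm (2 * p) γ * schattenNorm (2 * q) α * opNorm g *
        schattenNorm (2 * p) δ * schattenNorm (2 * q) β)) : F ≤ C * rho p q a := by
  refine le_mul_csInf ?_ hC ?_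
  · exact ⟨_, 1, 1, 1, 1, a, by simp, rfl⟩
  · rintro _ ⟨γ, δ, α, β, g, ha, rfl⟩
    exact h γ δ α β g ha

lemma rho_smul_le (t : ℝ) (ht : 0 < t) (a : Matrix (Fin n × Fin m) (Fin n × Fin m) ℂ) :
    rho p q (t • a) ≤ t * rho p q a := by
  refine le_mul_rho ht.le fun γ δ α β g ha => ?_
  rw [ha, ← Matrix.smul_mul, ← Matrix.mul_smul]
  refine (rho_mul_mul_le γ δ α β (t • g)).trans_eq ?_
  rw [opNorm_smul ht.le]
  ring

end Infimum

section Amplification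

variable {k l m n : ℕ}

lemma amp_smul (u : Matrix (Fin n) (Fin n) ℂ →ₗ[ℂ] Matrix (Fin m) (Fin m) ℂ) (t : ℝ)
    (x : Matrix (Fin n × Fin k) (Fin n × Fin k) ℂ) : amp u (t • x) = t • amp u x := by
  ext i j
  exact congrFun₂ (u.map_smul_of_tower t (of fun i' j' => x (i', i.2) (j', j.2))) i.1 j.1

lemma amp_ampLeft_comm (u : Matrix (Fin n) (Fin n) ℂ →ₗ[ℂ] Matrix (Fin m) (Fin m) ℂ)
    (Θ : Matrix (Fin k) (Fin k) ℂ →ₗ[ℂ] Matrix (Fin l) (Fin l) ℂ)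
    (x : Matrix (Fin n × Fin k) (Fin n × Fin k) ℂ) :
    amp u (ampLeft Θ x) = ampLeft Θ (amp u x) := by
  ext ⟨i, a⟩ ⟨j, b⟩
  obtain ⟨G, hG⟩ := exists_eq_trace_mul (entryLinearMap ℂ ℂ i j ∘ₗ u)
  obtain ⟨H, hH⟩ := exists_eq_trace_mul (entryLinearMap ℂ ℂ a b ∘ₗ Θ)
  have hG' (w) : u w i j = ∑ i', ∑ j', G i' j' * w j' i' := hG w
  have hH' (w) : Θ w a b = ∑ a', ∑ b', H a' b' * w b' a' := hH w
  simp only [amp, ampLeft, of_apply, hG', hH', Finset.mul_sum]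
  calc _ = ∑ i', ∑ a', ∑ j', ∑ b', G i' j' * (H a' b' * x (j', b') (i', a')) :=
        Finset.sum_congr rfl fun _ _ => Finset.sum_comm
    _ = ∑ a', ∑ i', ∑ b', ∑ j', G i' j' * (H a' b' * x (j', b') (i', a')) := by
        rw [Finset.sum_comm]
        exact Finset.sum_congr rfl fun _ _ => Finset.sum_congr rfl fun _ _ => Finset.sum_comm
    _ = _ := Finset.sum_congr rfl fun _ _ => by
        rw [Finset.sum_comm]
        simp only [mul_left_comm]

lemma amp_mulLeftRight (γ δ : Matrix (Fin n) (Fin n) ℂ)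
    (x : Matrix (Fin n × Fin k) (Fin n × Fin k) ℂ) :
    amp (LinearMap.mulLeftRight ℂ (γ, δ)) x =
      (γ ⊗ₖ (1 : Matrix (Fin k) (Fin k) ℂ)) * x * (δ ⊗ₖ (1 : Matrix (Fin k) (Fin k) ℂ)) := by
  ext ⟨i, a⟩ ⟨j, b⟩
  simp [amp, mul_apply, Fintype.sum_prod_type, one_apply]

lemma ampLeft_mulLeftRight (α β : Matrix (Fin k) (Fin k) ℂ)
    (x : Matrix (Fin n × Fin k) (Fin n × Fin k) ℂ) :
    ampLeft (LinearMap.mulLeftRight ℂ (α, β)) x =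
      ((1 : Matrix (Fin n) (Fin n) ℂ) ⊗ₖ α) * x * ((1 : Matrix (Fin n) (Fin n) ℂ) ⊗ₖ β) := by
  ext ⟨i, a⟩ ⟨j, b⟩
  simp [ampLeft, mul_apply, Fintype.sum_prod_type, one_apply]

lemma ampLeft_kronecker (Θ : Matrix (Fin k) (Fin k) ℂ →ₗ[ℂ] Matrix (Fin l) (Fin l) ℂ)
    (P : Matrix (Fin n) (Fin n) ℂ) (w : Matrix (Fin k) (Fin k) ℂ) :
    ampLeft Θ (P ⊗ₖ w) = P ⊗ₖ Θ w := by
  ext i j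
  exact congrFun₂ (Θ.map_smul (P i.1 j.1) w) i.2 j.2

lemma one_kronecker_mul_mul_one_kronecker (γ δ : Matrix (Fin n) (Fin n) ℂ)
    (α β : Matrix (Fin k) (Fin k) ℂ) (y : Matrix (Fin n × Fin k) (Fin n × Fin k) ℂ) :
    ((1 : Matrix (Fin n) (Fin n) ℂ) ⊗ₖ α) * ((γ ⊗ₖ (1 : Matrix (Fin k) (Fin k) ℂ)) * y *
      (δ ⊗ₖ (1 : Matrix (Fin k) (Fin k) ℂ))) * ((1 : Matrix (Fin n) (Fin n) ℂ) ⊗ₖ β) =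
      (γ ⊗ₖ α) * y * (δ ⊗ₖ β) := by
  have hleft : γ ⊗ₖ α = ((1 : Matrix (Fin n) (Fin n) ℂ) ⊗ₖ α) * (γ ⊗ₖ 1) := by
    rw [← mul_kronecker_mul, Matrix.one_mul, Matrix.mul_one]
  have hright : δ ⊗ₖ β = (δ ⊗ₖ (1 : Matrix (Fin k) (Fin k) ℂ)) * (1 ⊗ₖ β) := by
    rw [← mul_kronecker_mul, Matrix.one_mul, Matrix.mul_one]
  rw [hleft, hright]
  simp only [Matrix.mul_assoc]

end Amplification

section TracePair

variable {p q : ℝ≥0∞} {m n : ℕ}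

lemma tracePair_eq_dotProduct (z : Matrix (Fin m × Fin m) (Fin m × Fin m) ℂ) :
    tracePair z = vec 1 ⬝ᵥ z *ᵥ vec 1 := by
  simp [tracePair, dotProduct, mulVec, Fintype.sum_prod_type, one_apply]

lemma tracePair_smul (t : ℝ) (z : Matrix (Fin m × Fin m) (Fin m × Fin m) ℂ) :
    tracePair (t • z) = t * tracePair z := by
  simp [tracePair, Finset.mul_sum]

lemma tracePair_kronecker (P Q : Matrix (Fin m) (Fin m) ℂ) :
    tracePair (P ⊗ₖ Q) = trace (Pᵀ * Q) := by
  simp only [tracePair, trace, diag_apply, mul_apply, transpose_apply, kroneckerMap_apply]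
  exact Finset.sum_comm

lemma tracePair_mul_mul (γ δ α β : Matrix (Fin m) (Fin m) ℂ)
    (g : Matrix (Fin m × Fin m) (Fin m × Fin m) ℂ) :
    tracePair ((γ ⊗ₖ α) * g * (δ ⊗ₖ β)) = vec (αᵀ * γ) ⬝ᵥ g *ᵥ vec (β * δᵀ) := by
  rw [tracePair_eq_dotProduct, ← mulVec_mulVec, ← mulVec_mulVec, dotProduct_mulVec,
    vec_vecMul_kronecker, kronecker_mulVec_vec, Matrix.mul_one, Matrix.mul_one]

lemma rho_one_kronecker_mul_mul_le (α β : Matrix (Fin m) (Fin m) ℂ)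
    (z : Matrix (Fin n × Fin m) (Fin n × Fin m) ℂ) :
    rho p q (((1 : Matrix (Fin n) (Fin n) ℂ) ⊗ₖ α) * z *
        ((1 : Matrix (Fin n) (Fin n) ℂ) ⊗ₖ β)) ≤
      schattenNorm (2 * q) α * schattenNorm (2 * q) β * pisierNorm p z := by
  refine le_mul_pisierNorm (mul_nonneg (schattenNorm_nonneg _ _) (schattenNorm_nonneg _ _))
    fun γ δ y hz => ?_
  rw [hz, one_kronecker_mul_mul_one_kronecker]
  exact (rho_mul_mul_le γ δ α β y).trans_eq (by ring)

variable [p.HolderConjugate q]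

lemma norm_tracePair_le_rho (a : Matrix (Fin m × Fin m) (Fin m × Fin m) ℂ) :
    ‖tracePair a‖ ≤ rho p q a := by
  rw [← one_mul (rho p q a)]
  refine le_mul_rho zero_le_one fun γ δ α β g ha => ?_
  have hαγ := norm_toLp_vec_mul_le (p := q) (q := p) αᵀ γ
  have hβδ := norm_toLp_vec_mul_le (p := q) (q := p) β δᵀ
  rw [schattenNorm_two_mul_transpose (ENNReal.HolderConjugate.ne_zero q p)] at hαγ
  rw [schattenNorm_two_mul_transpose (ENNReal.HolderConjugate.ne_zero p q)] at hβδ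
  have hg : 0 ≤ opNorm g := norm_nonneg _
  rw [ha, tracePair_mul_mul]
  calc _ ≤ _ := norm_dotProduct_mulVec_le _ g _
    _ ≤ schattenNorm (2 * q) α * schattenNorm (2 * p) γ *
        (opNorm g * (schattenNorm (2 * q) β * schattenNorm (2 * p) δ)) := by
        rw [← opNorm_eq_norm]
        gcongr
        exact (norm_nonneg _).trans hαγ
    _ = _ := by ring

/-- `a = (γ ⊗ α) g (δ ⊗ β)` arises from `(γ ⊗ 1) g (δ ⊗ 1)` by multiplications in the second leg,
and these commute with `u ⊗ id`. -/
lemma norm_tracePair_amp_le (u : Matrix (Fin n) (Fin n) ℂ →ₗ[ℂ] Matrix (Fin m) (Fin m) ℂ)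
    {C : ℝ} (hC : 0 ≤ C) (hu : ∀ x : Matrix (Fin n × Fin m) (Fin n × Fin m) ℂ,
      pisierNorm p (amp u x) ≤ C * pisierNorm p x)
    (a : Matrix (Fin n × Fin m) (Fin n × Fin m) ℂ) :
    ‖tracePair (amp u a)‖ ≤ C * rho p q a := by
  refine le_mul_rho hC fun γ δ α β g ha => ?_
  set x := (γ ⊗ₖ (1 : Matrix (Fin m) (Fin m) ℂ)) * g * (δ ⊗ₖ (1 : Matrix (Fin m) (Fin m) ℂ))
  have hα := schattenNorm_nonneg (2 * q) α
  have hβ := schattenNorm_nonneg (2 * q) β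
  calc ‖tracePair (amp u a)‖
      = ‖tracePair (((1 : Matrix (Fin m) (Fin m) ℂ) ⊗ₖ α) * amp u x *
          ((1 : Matrix (Fin m) (Fin m) ℂ) ⊗ₖ β))‖ := by
        rw [ha, ← one_kronecker_mul_mul_one_kronecker, ← ampLeft_mulLeftRight,
          ← ampLeft_mulLeftRight, amp_ampLeft_comm]
    _ ≤ _ := norm_tracePair_le_rho (p := p) (q := q) _
    _ ≤ schattenNorm (2 * q) α * schattenNorm (2 * q) β * pisierNorm p (amp u x) :=
        rho_one_kronecker_mul_mul_le α β _
    _ ≤ schattenNorm (2 * q) α * schattenNorm (2 * q) β *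
          (C * (schattenNorm (2 * p) γ * opNorm g * schattenNorm (2 * p) δ)) := by
        gcongr
        refine (hu x).trans ?_
        gcongr
        exact pisierNorm_mul_mul_le γ δ g
    _ = _ := by ring

end TracePair

section Sandwich

open scoped Matrix.Norms.L2Operator

variable {κ μ L : Type*} [Fintype κ] [Fintype L]

/-- The linear map `w ↦ Vᴴ * (w ⊗ 1) * W`: the general form of a completely bounded map between
matrix algebras, with ancilla `L`. -/
def sandwich (V W : Matrix (κ × L) μ ℂ) : Matrix κ κ ℂ →ₗ[ℂ] Matrix μ μ ℂ where
  toFun w := Vᴴ * (w ⊗ₖ (1 : Matrix L L ℂ)) * W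
  map_add' w w' := by rw [add_kronecker, Matrix.mul_add, Matrix.add_mul]
  map_smul' c w := by rw [smul_kronecker, Matrix.mul_smul, Matrix.smul_mul, RingHom.id_apply]

lemma sandwich_apply (V W : Matrix (κ × L) μ ℂ) (w : Matrix κ κ ℂ) :
    sandwich V W w = Vᴴ * (w ⊗ₖ (1 : Matrix L L ℂ)) * W := rfl

lemma sandwich_mul [Fintype μ] (V W : Matrix (κ × L) μ ℂ) (A B : Matrix μ μ ℂ) :
    sandwich (V * A) (W * B) = LinearMap.mulLeftRight ℂ (Aᴴ, B) ∘ₗ sandwich V W := by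
  ext1 w
  simp only [LinearMap.comp_apply, sandwich_apply, LinearMap.mulLeftRight_apply,
    conjTranspose_mul, Matrix.mul_assoc]

variable {m n k : ℕ}

lemma ampLeft_sandwich (V W : Matrix (Fin k × L) (Fin m) ℂ)
    (y : Matrix (Fin n × Fin k) (Fin n × Fin k) ℂ) :
    ampLeft (sandwich V W) y = ((1 : Matrix (Fin n) (Fin n) ℂ) ⊗ₖ V)ᴴ *
      (y ⊗ₖ (1 : Matrix L L ℂ)).submatrix (Equiv.prodAssoc _ _ _).symm
        (Equiv.prodAssoc _ _ _).symm * ((1 : Matrix (Fin n) (Fin n) ℂ) ⊗ₖ W) := by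
  ext ⟨i, a⟩ ⟨j, b⟩
  simp [ampLeft, sandwich_apply, mul_apply, Fintype.sum_prod_type, one_apply, apply_ite star]

lemma opNorm_ampLeft_sandwich_le {V W : Matrix (Fin k × L) (Fin m) ℂ} (hV : ‖V‖ ≤ 1)
    (hW : ‖W‖ ≤ 1) (y : Matrix (Fin n × Fin k) (Fin n × Fin k) ℂ) :
    opNorm (ampLeft (sandwich V W) y) ≤ opNorm y := by
  have hV' : ‖((1 : Matrix (Fin n) (Fin n) ℂ) ⊗ₖ V)ᴴ‖ ≤ 1 :=
    (l2_opNorm_conjTranspose _).trans_le ((norm_one_kronecker_le V).trans hV)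
  rw [opNorm_eq_norm, opNorm_eq_norm, ampLeft_sandwich]
  calc _ ≤ _ := (l2_opNorm_mul _ _).trans (mul_le_mul_of_nonneg_right (l2_opNorm_mul _ _)
        (norm_nonneg _))
    _ ≤ 1 * ‖y‖ * 1 := by
        gcongr
        · exact norm_kronecker_one_submatrix_le _ y
        · exact (norm_one_kronecker_le W).trans hW
    _ = ‖y‖ := by ring

lemma ampLeft_mul_mul (Θ : Matrix (Fin k) (Fin k) ℂ →ₗ[ℂ] Matrix (Fin m) (Fin m) ℂ)
    (γ δ : Matrix (Fin n) (Fin n) ℂ) (y : Matrix (Fin n × Fin k) (Fin n × Fin k) ℂ) :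
    ampLeft Θ ((γ ⊗ₖ (1 : Matrix (Fin k) (Fin k) ℂ)) * y * (δ ⊗ₖ (1 : Matrix (Fin k) (Fin k) ℂ))) =
      (γ ⊗ₖ (1 : Matrix (Fin m) (Fin m) ℂ)) * ampLeft Θ y *
        (δ ⊗ₖ (1 : Matrix (Fin m) (Fin m) ℂ)) := by
  rw [← amp_mulLeftRight, ← amp_ampLeft_comm, amp_mulLeftRight]

lemma ampLeft_sandwich_mul (V W : Matrix (Fin k × L) (Fin m) ℂ) (A B : Matrix (Fin m) (Fin m) ℂ)
    (γ δ : Matrix (Fin n) (Fin n) ℂ) (y : Matrix (Fin n × Fin k) (Fin n × Fin k) ℂ) :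
    ampLeft (sandwich (V * A) (W * B)) ((γ ⊗ₖ (1 : Matrix (Fin k) (Fin k) ℂ)) * y *
        (δ ⊗ₖ (1 : Matrix (Fin k) (Fin k) ℂ))) =
      (γ ⊗ₖ Aᴴ) * ampLeft (sandwich V W) y * (δ ⊗ₖ B) := by
  rw [← one_kronecker_mul_mul_one_kronecker γ δ Aᴴ B, ← ampLeft_mul_mul, ← ampLeft_mulLeftRight,
    sandwich_mul]
  rfl

/-- The matrix of the vectors `ξ r ∈ ℂᵐ ⊗ ℂᵏ`, the columns of `ξ`, regarded as a single operator
from `ℂᵐ` to `ℂᵏ ⊗ ℂᴸ`. -/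
def regroup {ι κ L : Type*} (ξ : Matrix (ι × κ) L ℂ) : Matrix (κ × L) ι ℂ :=
  of fun kr i => ξ (i, kr.1) kr.2

lemma tracePair_ampLeft_sandwich (ξ η : Matrix (Fin m × Fin k) L ℂ)
    (z : Matrix (Fin m × Fin k) (Fin m × Fin k) ℂ) :
    tracePair (ampLeft (sandwich (regroup ξ) (regroup η)) z) = trace (ξᴴ * z * η) := by
  have hentry (i j : Fin m) : ampLeft (sandwich (regroup ξ) (regroup η)) z (i, i) (j, j) =
      ∑ l, ∑ r, (∑ k', star (ξ (i, k') r) * z (i, k') (j, l)) * η (j, l) r := by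
    simp [ampLeft, sandwich_apply, regroup, mul_apply, Fintype.sum_prod_type, one_apply]
  have htrace : trace (ξᴴ * z * η) =
      ∑ r, ∑ j, ∑ l, ∑ i, (∑ k', star (ξ (i, k') r) * z (i, k') (j, l)) * η (j, l) r := by
    simp [trace, mul_apply, Fintype.sum_prod_type, Finset.sum_mul]
  simp only [tracePair, hentry, htrace]
  rw [Finset.sum_comm]
  symm
  rw [Finset.sum_comm]
  refine Finset.sum_congr rfl fun j _ => ?_
  simp only [Finset.sum_comm (s := (Finset.univ : Finset L))]
  rw [Finset.sum_comm]

lemma trace_conjTranspose_mul_kronecker_one_mul (ξ : Matrix (Fin m × Fin k) L ℂ)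
    (P : Matrix (Fin m) (Fin m) ℂ) :
    trace (ξᴴ * (P ⊗ₖ (1 : Matrix (Fin k) (Fin k) ℂ)) * ξ) =
      trace (Pᵀ * ((regroup ξ)ᴴ * regroup ξ)) := by
  rw [← tracePair_ampLeft_sandwich, ampLeft_kronecker, tracePair_kronecker, sandwich_apply,
    one_kronecker_one, Matrix.mul_one]

end Sandwich

section PisierDuality

open scoped Matrix.Norms.L2Operator

variable {p q : ℝ≥0∞} {m k : ℕ} {K : ℝ}

lemma exists_mem_positivePolar_re_trace_eq {ι : Type} [Fintype ι] [DecidableEq ι]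
    [p.HolderConjugate q] (hK : 0 ≤ K) (A : Matrix ι ι ℂ) :
    ∃ P ∈ positivePolar q K, (trace (Pᵀ * (Aᴴ * A))).re = K * schattenNorm (2 * q) A ^ 2 := by
  obtain ⟨b, hb, hAb⟩ := exists_re_trace_gram_mul_gram_eq (p := q) (q := p) A
  refine ⟨(K • (bᴴ * b))ᵀ, transpose_mem_positivePolar (ENNReal.HolderConjugate.ne_zero q p)
    (smul_conjTranspose_mul_self_mem_positivePolar hK hb), ?_⟩
  rw [transpose_transpose, Matrix.smul_mul, trace_smul, Complex.smul_re, trace_mul_comm, hAb,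
    smul_eq_mul]

lemma exists_regroup_eq_mul_and_re_trace_eq {L : Type*} [Fintype L] [p.HolderConjugate q]
    (hK : 0 ≤ K) (ξ : Matrix (Fin m × Fin k) L ℂ) :
    ∃ (V : Matrix (Fin k × L) (Fin m) ℂ) (A : Matrix (Fin m) (Fin m) ℂ), ‖V‖ ≤ 1 ∧
      regroup ξ = V * A ∧ ∃ P ∈ positivePolar (ι := Fin m) q K,
        (trace (ξᴴ * (P ⊗ₖ (1 : Matrix (Fin k) (Fin k) ℂ)) * ξ)).re =
          K * schattenNorm (2 * q) A ^ 2 := by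
  obtain ⟨A, hA⟩ :=
    exists_eq_conjTranspose_mul_of_posSemidef (posSemidef_conjTranspose_mul_self (regroup ξ))
  obtain ⟨V, hξ, hV⟩ := exists_contraction_eq_mul hA
  obtain ⟨P, hP, hPA⟩ := exists_mem_positivePolar_re_trace_eq (p := p) (q := q) hK A
  refine ⟨V, A, hV, hξ, P, hP, ?_⟩
  rw [trace_conjTranspose_mul_kronecker_one_mul, hA, hPA]

/-- The self-adjoint block matrix `[[P ⊗ 1, z], [zᴴ, Q ⊗ 1]]`, whose positivity expresses that
`z = (P^(1/2) ⊗ 1) y (Q^(1/2) ⊗ 1)` with `y` a contraction. -/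
def pisierBlock (z : Matrix (Fin m × Fin k) (Fin m × Fin k) ℂ)
    (P Q : Matrix (Fin m) (Fin m) ℂ) :
    Matrix ((Fin m × Fin k) ⊕ (Fin m × Fin k)) ((Fin m × Fin k) ⊕ (Fin m × Fin k)) ℂ :=
  fromBlocks (P ⊗ₖ (1 : Matrix (Fin k) (Fin k) ℂ)) z zᴴ (Q ⊗ₖ (1 : Matrix (Fin k) (Fin k) ℂ))

variable (z : Matrix (Fin m × Fin k) (Fin m × Fin k) ℂ) {P Q : Matrix (Fin m) (Fin m) ℂ}

lemma isHermitian_pisierBlock (hP : P.IsHermitian) (hQ : Q.IsHermitian) :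
    (pisierBlock z P Q).IsHermitian := by
  refine IsHermitian.fromBlocks ?_ rfl ?_
  · rw [IsHermitian, conjTranspose_kronecker, hP.eq, conjTranspose_one]
  · rw [IsHermitian, conjTranspose_kronecker, hQ.eq, conjTranspose_one]

lemma continuous_pisierBlock :
    Continuous fun PQ : Matrix (Fin m) (Fin m) ℂ × Matrix (Fin m) (Fin m) ℂ =>
      pisierBlock z PQ.1 PQ.2 := by
  refine Continuous.matrix_fromBlocks ?_ continuous_const continuous_const ?_
  all_goals
    refine continuous_matrix fun i j => ?_
    simp only [kroneckerMap_apply]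
    fun_prop

lemma convex_image_pisierBlock {S : Set (Matrix (Fin m) (Fin m) ℂ × Matrix (Fin m) (Fin m) ℂ)}
    (hS : Convex ℝ S) : Convex ℝ ((fun PQ => pisierBlock z PQ.1 PQ.2) '' S) := by
  rintro _ ⟨X, hX, rfl⟩ _ ⟨Y, hY, rfl⟩ s t hs ht hst
  refine ⟨s • X + t • Y, hS hX hY hs ht hst, ?_⟩
  have hz (w : Matrix (Fin m × Fin k) (Fin m × Fin k) ℂ) : s • w + t • w = w := by
    rw [← add_smul, hst, one_smul]
  simp only [pisierBlock, fromBlocks_smul, fromBlocks_add, hz, Prod.fst_add, Prod.snd_add,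
    Prod.smul_fst, Prod.smul_snd, add_kronecker, smul_kronecker]

lemma re_trace_conjTranspose_mul_pisierBlock_mul {L : Type*} [Fintype L]
    (ξ η : Matrix (Fin m × Fin k) L ℂ) :
    (trace ((fromRows ξ η)ᴴ * pisierBlock z P Q * fromRows ξ η)).re =
      (trace (ξᴴ * (P ⊗ₖ (1 : Matrix (Fin k) (Fin k) ℂ)) * ξ)).re +
        (trace (ηᴴ * (Q ⊗ₖ (1 : Matrix (Fin k) (Fin k) ℂ)) * η)).re +
        2 * (trace (ξᴴ * z * η)).re := by
  have hcross : trace (ηᴴ * zᴴ * ξ) = star (trace (ξᴴ * z * η)) := by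
    rw [← trace_conjTranspose]
    simp only [conjTranspose_mul, conjTranspose_conjTranspose, Matrix.mul_assoc]
  rw [conjTranspose_fromRows_eq_fromCols_conjTranspose, Matrix.mul_assoc, pisierBlock,
    fromBlocks_mul_fromRows, fromCols_mul_fromRows]
  simp only [Matrix.mul_add, ← Matrix.mul_assoc, trace_add, hcross, Complex.add_re,
    RCLike.star_def, Complex.conj_re]
  ring

variable {z}

lemma exists_eq_of_posSemidef_pisierBlock {A B : Matrix (Fin m) (Fin m) ℂ}
    (h : (pisierBlock z (Aᴴ * A) (Bᴴ * B)).PosSemidef) :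
    ∃ y : Matrix (Fin m × Fin k) (Fin m × Fin k) ℂ, ‖y‖ ≤ 1 ∧
      z = (Aᴴ ⊗ₖ (1 : Matrix (Fin k) (Fin k) ℂ)) * y * (B ⊗ₖ (1 : Matrix (Fin k) (Fin k) ℂ)) := by
  obtain ⟨M, hM⟩ := exists_eq_conjTranspose_mul_of_posSemidef h
  rw [← fromCols_toCols M, conjTranspose_fromCols_eq_fromRows_conjTranspose,
    fromRows_mul_fromCols, pisierBlock, fromBlocks_inj] at hM
  obtain ⟨hA, hz, -, hB⟩ := hM
  have hkron (C : Matrix (Fin m) (Fin m) ℂ) : (Cᴴ * C) ⊗ₖ (1 : Matrix (Fin k) (Fin k) ℂ) =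
      (C ⊗ₖ (1 : Matrix (Fin k) (Fin k) ℂ))ᴴ * (C ⊗ₖ (1 : Matrix (Fin k) (Fin k) ℂ)) := by
    rw [conjTranspose_kronecker, ← mul_kronecker_mul, conjTranspose_one, Matrix.mul_one]
  rw [hkron] at hA hB
  obtain ⟨V, hV, hV₁⟩ := exists_contraction_eq_mul hA.symm
  obtain ⟨W, hW, hW₁⟩ := exists_contraction_eq_mul hB.symm
  refine ⟨Vᴴ * W, (l2_opNorm_mul _ _).trans ?_, ?_⟩
  · rw [l2_opNorm_conjTranspose]
    exact mul_le_one₀ hV₁ (norm_nonneg _) hW₁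
  · rw [hz, hV, hW, conjTranspose_mul, conjTranspose_kronecker, conjTranspose_one]
    simp only [Matrix.mul_assoc]

variable [p.HolderConjugate q]

lemma pisierNorm_le_of_posSemidef_pisierBlock (hP : P ∈ positivePolar q K)
    (hQ : Q ∈ positivePolar q K) (h : (pisierBlock z P Q).PosSemidef) : pisierNorm p z ≤ K := by
  obtain ⟨A, rfl⟩ := exists_eq_conjTranspose_mul_of_posSemidef hP.1
  obtain ⟨B, rfl⟩ := exists_eq_conjTranspose_mul_of_posSemidef hQ.1
  obtain ⟨y, hy, rfl⟩ := exists_eq_of_posSemidef_pisierBlock h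
  have hA := schattenNorm_sq_le_of_mem_positivePolar (p := p) hP
  have hB := schattenNorm_sq_le_of_mem_positivePolar (p := p) hQ
  have hA₀ := schattenNorm_nonneg (2 * p) A
  have hB₀ := schattenNorm_nonneg (2 * p) B
  calc _ ≤ schattenNorm (2 * p) Aᴴ * opNorm y * schattenNorm (2 * p) B :=
        pisierNorm_mul_mul_le _ _ _
    _ ≤ schattenNorm (2 * p) A * 1 * schattenNorm (2 * p) B := by
        rw [schattenNorm_two_mul_conjTranspose (ENNReal.HolderConjugate.ne_zero p q),
          opNorm_eq_norm]
        gcongr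
    _ ≤ K := by linarith [two_mul_le_add_sq (schattenNorm (2 * p) A) (schattenNorm (2 * p) B)]

lemma exists_forall_re_trace_pisierBlock_neg (hz : K < pisierNorm p z) :
    ∃ ξ η : Matrix (Fin m × Fin k) ((Fin m × Fin k) ⊕ (Fin m × Fin k)) ℂ,
      ∀ P ∈ positivePolar q K, ∀ Q ∈ positivePolar q K,
        (trace ((fromRows ξ η)ᴴ * pisierBlock z P Q * fromRows ξ η)).re < 0 := by
  have hcomp : IsCompact (positivePolar (ι := Fin m) q K) := isCompact_positivePolar (p := p)
  have hconv : Convex ℝ (positivePolar (ι := Fin m) q K) := convex_positivePolar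
  obtain ⟨M, hM⟩ := exists_forall_re_trace_neg (convex_image_pisierBlock z (hconv.prod hconv))
    ((hcomp.prod hcomp).image (continuous_pisierBlock z))
    (by
      rintro _ ⟨⟨P, Q⟩, ⟨hP, hQ⟩, rfl⟩
      exact isHermitian_pisierBlock z hP.1.isHermitian hQ.1.isHermitian)
    (by
      rintro _ ⟨⟨P, Q⟩, ⟨hP, hQ⟩, rfl⟩ hpos
      exact hz.not_ge (pisierNorm_le_of_posSemidef_pisierBlock hP hQ hpos))
  refine ⟨M.toRows₁, M.toRows₂, fun P hP Q hQ => ?_⟩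
  rw [fromRows_toRows]
  exact hM _ ⟨(P, Q), ⟨hP, hQ⟩, rfl⟩

lemma pisierNorm_le_of_forall_sandwich (hK : 0 ≤ K)
    (h : ∀ {L : Type} [Fintype L] (V W : Matrix (Fin k × L) (Fin m) ℂ)
      (A B : Matrix (Fin m) (Fin m) ℂ), ‖V‖ ≤ 1 → ‖W‖ ≤ 1 →
      ‖tracePair (ampLeft (sandwich (V * A) (W * B)) z)‖ ≤
        K * schattenNorm (2 * q) A * schattenNorm (2 * q) B) : pisierNorm p z ≤ K := by
  by_contra! hz
  obtain ⟨ξ, η, hneg⟩ := exists_forall_re_trace_pisierBlock_neg (q := q) hz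
  obtain ⟨V, A, hV, hξ, P, hP, hPA⟩ :=
    exists_regroup_eq_mul_and_re_trace_eq (p := p) (q := q) hK ξ
  obtain ⟨W, B, hW, hη, Q, hQ, hQB⟩ :=
    exists_regroup_eq_mul_and_re_trace_eq (p := p) (q := q) hK η
  have hlt := hneg P hP Q hQ
  have hle := h V W A B hV hW
  rw [← hξ, ← hη, tracePair_ampLeft_sandwich] at hle
  rw [re_trace_conjTranspose_mul_pisierBlock_mul, hPA, hQB] at hlt
  have hre := (abs_le.1 ((Complex.abs_re_le_norm (trace (ξᴴ * z * η))).trans hle)).1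
  nlinarith [mul_nonneg hK (sq_nonneg (schattenNorm (2 * q) A - schattenNorm (2 * q) B))]

end PisierDuality

section RegularNormDuality

open scoped Matrix.Norms.L2Operator

variable {p q : ℝ≥0∞} {n m k : ℕ} (u : Matrix (Fin n) (Fin n) ℂ →ₗ[ℂ] Matrix (Fin m) (Fin m) ℂ)
  {C : ℝ}

lemma norm_tracePair_ampLeft_sandwich_le (hq : q ≠ 0) (hC : 0 ≤ C)
    (hu : ∀ a : Matrix (Fin n × Fin m) (Fin n × Fin m) ℂ, ‖tracePair (amp u a)‖ ≤ C * rho p q a)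
    {L : Type*} [Fintype L] {V W : Matrix (Fin k × L) (Fin m) ℂ} (hV : ‖V‖ ≤ 1) (hW : ‖W‖ ≤ 1)
    (A B : Matrix (Fin m) (Fin m) ℂ) (γ δ : Matrix (Fin n) (Fin n) ℂ)
    (y : Matrix (Fin n × Fin k) (Fin n × Fin k) ℂ) :
    ‖tracePair (ampLeft (sandwich (V * A) (W * B))
      (amp u ((γ ⊗ₖ (1 : Matrix (Fin k) (Fin k) ℂ)) * y * (δ ⊗ₖ 1))))‖ ≤
      C * (schattenNorm (2 * p) γ * opNorm y * schattenNorm (2 * p) δ) *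
        schattenNorm (2 * q) A * schattenNorm (2 * q) B := by
  have hγ := schattenNorm_nonneg (2 * p) γ
  have hδ := schattenNorm_nonneg (2 * p) δ
  have hA := schattenNorm_nonneg (2 * q) A
  have hB := schattenNorm_nonneg (2 * q) B
  rw [← amp_ampLeft_comm, ampLeft_sandwich_mul]
  calc _ ≤ C * rho p q ((γ ⊗ₖ Aᴴ) * ampLeft (sandwich V W) y * (δ ⊗ₖ B)) := hu _
    _ ≤ C * (schattenNorm (2 * p) γ * schattenNorm (2 * q) A * opNorm y *
          schattenNorm (2 * p) δ * schattenNorm (2 * q) B) := by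
        rw [← schattenNorm_two_mul_conjTranspose hq A] at hA ⊢
        refine mul_le_mul_of_nonneg_left ((rho_mul_mul_le γ δ Aᴴ B _).trans ?_) hC
        gcongr
        exact opNorm_ampLeft_sandwich_le hV hW y
    _ = _ := by ring

lemma pisierNorm_amp_le [p.HolderConjugate q] (hC : 0 ≤ C)
    (hu : ∀ a : Matrix (Fin n × Fin m) (Fin n × Fin m) ℂ, ‖tracePair (amp u a)‖ ≤ C * rho p q a)
    (x : Matrix (Fin n × Fin k) (Fin n × Fin k) ℂ) :
    pisierNorm p (amp u x) ≤ C * pisierNorm p x := by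
  refine le_mul_pisierNorm hC fun γ δ y hx => ?_
  refine pisierNorm_le_of_forall_sandwich (q := q)
    (mul_nonneg hC (pisierNorm_value_nonneg γ δ y)) fun V W A B hV hW => ?_
  rw [hx]
  exact norm_tracePair_ampLeft_sandwich_le u (ENNReal.HolderConjugate.ne_zero q p) hC hu hV hW
    A B γ δ y

lemma regNorm_le_coe_iff (C : NNReal) : regNorm p u ≤ C ↔
    ∀ (l : ℕ) (x : Matrix (Fin n × Fin (l + 1)) (Fin n × Fin (l + 1)) ℂ),
      pisierNorm p (amp u x) ≤ C * pisierNorm p x := by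
  simp only [regNorm, iSup_le_iff, ENNReal.ofReal_le_coe]
  refine forall_congr' fun l => forall_le_one_imp_le_iff pisierNorm_nonneg pisierNorm_smul_le
    (fun t ht x => ?_) C.2
  rw [amp_smul]
  exact pisierNorm_smul_le t ht _

lemma iSup_rho_le_one_le_coe_iff (C : NNReal) :
    (⨆ (a : Matrix (Fin n × Fin m) (Fin n × Fin m) ℂ) (_ : rho p q a ≤ 1),
      ENNReal.ofReal ‖tracePair (amp u a)‖) ≤ C ↔
    ∀ a : Matrix (Fin n × Fin m) (Fin n × Fin m) ℂ, ‖tracePair (amp u a)‖ ≤ C * rho p q a := by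
  simp only [iSup_le_iff, ENNReal.ofReal_le_coe]
  refine forall_le_one_imp_le_iff rho_nonneg rho_smul_le (fun t ht a => ?_) C.2
  rw [amp_smul, tracePair_smul, norm_mul, Complex.norm_of_nonneg ht.le]

end RegularNormDuality

end RegularNorm

/-- Theorem 3.2: `(X_p^{nm})^* = B_r(S_p^n, S_p^m)` isometrically, i.e. the regular norm of
`u` equals its norm as a linear functional on `(M_n ⊗ M_m, ρ_p)` under the trace pairing. -/
theorem regNorm_eq_dual_rho {n m : ℕ} (hn : 1 ≤ n) (hm : 1 ≤ m) (p q : ℝ≥0∞) (hp : 1 ≤ p)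
    (hpq : p⁻¹ + q⁻¹ = 1)
    (u : Matrix (Fin n) (Fin n) ℂ →ₗ[ℂ] Matrix (Fin m) (Fin m) ℂ) :
    regNorm p (⇑u) = ⨆ (a : Matrix (Fin n × Fin m) (Fin n × Fin m) ℂ) (_ : rho p q a ≤ 1),
      ENNReal.ofReal ‖tracePair (amp (⇑u) a)‖ := by
  obtain ⟨l, rfl⟩ := Nat.exists_eq_add_of_le' hm
  have := ENNReal.holderConjugate_iff.2 hpq
  refine ENNReal.eq_of_forall_le_nnreal_iff fun C => ?_
  rw [regNorm_le_coe_iff, iSup_rho_le_one_le_coe_iff]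
  exact ⟨fun h a => norm_tracePair_amp_le u C.2 (h l) a,
    fun h _ x => pisierNorm_amp_le (q := q) u C.2 h x⟩
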